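/- Let g be a finite-dimensional simple complex Lie algebra with highest root Λ written as Λ = Σᵢ mᵢ αᵢ in the simple roots. If d is an index such that deleting the node d from the Dynkin diagram of g leaves a connected diagram (i.e. g_d is simple), then m_d ≤ 3. -/

import Mathlib

/-- `MarkReach A u p v`: there is a non-backtracking walk `p, v, …, u`. -/
inductive MarkReach {V : Type} (A : V → V → ℤ) (u : V) : V → V → Prop
  | base (p : V) (h : 1 ≤ A u p) : MarkReach A u p u
  | step (p v q : V) (hp : 1 ≤ A v p) (hq : 1 ≤ A v q) (hpq : p ≠ q) (h : MarkReach A u v q) :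
      MarkReach A u p v

section Comb
set_option linter.unusedSectionVars false
variable {V : Type} [Fintype V] [DecidableEq V]

/-- The hypotheses on the marks and the (negated, off-diagonal) Cartan matrix. -/
structure MarkData (f : V → ℤ) (A : V → V → ℤ) (u : V) : Prop where
  pos : ∀ i, 1 ≤ f i
  nonneg : ∀ i j, 0 ≤ A i j
  diag : ∀ i, A i i = 0
  symm : ∀ i j, 1 ≤ A i j → 1 ≤ A j i
  le : ∀ i, ∑ j, A i j * f j ≤ 2 * f i
  eq : ∀ i, 3 ≤ f i → ∑ j, A i j * f j = 2 * f i
  u_le : f u ≤ 2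
  u_lt : ∑ j, A u j * f j < 2 * f u

variable {f : V → ℤ} {A : V → V → ℤ} {u : V}

lemma MarkData.term_nonneg (D : MarkData f A u) (i j : V) : 0 ≤ A i j * f j :=
  mul_nonneg (D.nonneg i j) (by have := D.pos j; lia)

lemma MarkData.le_term (D : MarkData f A u) {i j : V} (h : 1 ≤ A i j) : f j ≤ A i j * f j := by
  have := D.pos j
  nlinarith

/-- Split off a sum one or two neighbours. -/
lemma MarkData.split1 (f : V → ℤ) (A : V → V → ℤ) (v p : V) :
    ∑ j, A v j * f j = A v p * f p + ∑ j ∈ Finset.univ.erase p, A v j * f j :=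
  (Finset.add_sum_erase _ _ (Finset.mem_univ p)).symm

lemma MarkData.split2 (f : V → ℤ) (A : V → V → ℤ) (v p q : V) (hpq : p ≠ q) :
    ∑ j, A v j * f j = A v p * f p + A v q * f q +
      ∑ j ∈ (Finset.univ.erase p).erase q, A v j * f j := by
  rw [MarkData.split1 f A v p, ← Finset.add_sum_erase (Finset.univ.erase p) _ (a := q)
    (by simp [hpq.symm])]
  ring

lemma MarkData.sum_nonneg (D : MarkData f A u) (v : V) (s : Finset V) :
    0 ≤ ∑ j ∈ s, A v j * f j :=
  Finset.sum_nonneg fun j _ => D.term_nonneg v j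

lemma MarkData.term_le_sum (D : MarkData f A u) (v : V) {s : Finset V} {x : V} (hx : x ∈ s) :
    A v x * f x ≤ ∑ j ∈ s, A v j * f j :=
  Finset.single_le_sum (f := fun j => A v j * f j) (fun j _ => D.term_nonneg v j) hx

/-- A neighbour has mark at least half. -/
lemma MarkData.half (D : MarkData f A u) {v x : V} (h : 1 ≤ A v x) : f v ≤ 2 * f x := by
  have h1 := D.le_term (D.symm _ _ h)
  have h2 := D.term_le_sum x (Finset.mem_univ v)
  have h3 := D.le x
  lia

/-- A partial sum is zero or contains a neighbour. -/
lemma MarkData.sum_cases (D : MarkData f A u) (v : V) (s : Finset V) :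
    ∑ j ∈ s, A v j * f j = 0 ∨ ∃ x ∈ s, 1 ≤ A v x := by
  by_cases h : ∃ x ∈ s, 1 ≤ A v x
  · exact Or.inr h
  · left
    apply Finset.sum_eq_zero
    intro j hj
    have h1 : ¬ 1 ≤ A v j := fun h' => h ⟨j, hj, h'⟩
    have h2 := D.nonneg v j
    have : A v j = 0 := by lia
    simp [this]

/-- A partial sum is zero or at least half of the mark. -/
lemma MarkData.sum_zero_or (D : MarkData f A u) (v : V) (s : Finset V) :
    ∑ j ∈ s, A v j * f j = 0 ∨ f v ≤ 2 * ∑ j ∈ s, A v j * f j := by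
  rcases D.sum_cases v s with h | ⟨x, hx, h⟩
  · exact Or.inl h
  · have h1 := D.half h
    have h2 := D.le_term h
    have h3 := D.term_le_sum v hx
    right; lia

/-- Along a non-backtracking walk to `u` the marks drop by at most one at each step. -/
lemma MarkData.back (D : MarkData f A u) {p v : V} (h : MarkReach A u p v) : f p - 1 ≤ f v := by
  induction h with
  | base p h =>
    have h1 := D.le_term h
    have h2 := D.term_le_sum u (Finset.mem_univ p)
    have h3 := D.u_lt
    have h4 := D.u_le
    lia
  | step p v q hp hq hpq h ih =>
    have h1 := D.le v
    rw [MarkData.split2 f A v p q hpq] at h1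
    have h2 := D.le_term hp
    have h3 := D.le_term hq
    have h4 := D.sum_nonneg v ((Finset.univ.erase p).erase q)
    lia

/-- `a * x ≤ x + r` with `r < x` forces `a = 1`. -/
lemma MarkData.eq_one {a x r : ℤ} (ha : 1 ≤ a) (h : a * x ≤ x + r) (hr : r < x) (hr0 : 0 ≤ r) :
    a = 1 := by
  by_contra hne
  have : 2 ≤ a := by lia
  nlinarith

lemma MarkData.flat (D : MarkData f A u) {p v : V} (h : MarkReach A u p v) :
    f p = f v → 4 ≤ f v → False := by
  induction h with
  | base p h =>
    intro _ h2
    have := D.u_le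
    lia
  | step p v q hp hq hpq h ih =>
    intro h1 h2
    have h3 := D.eq v (by lia)
    rw [MarkData.split2 f A v p q hpq] at h3
    have h4 := D.le_term hp
    have h5 := D.le_term hq
    have h6 := D.sum_nonneg v ((Finset.univ.erase p).erase q)
    have h7 := D.back h
    have h8 : A v p = 1 := MarkData.eq_one (x := f p) (r := 1) hp (by lia) (by lia) (by lia)
    have h9 : A v q = 1 := MarkData.eq_one (x := f q) (r := 1) hq (by lia) (by lia) (by lia)
    rw [h8, h9] at h3
    rcases D.sum_zero_or v ((Finset.univ.erase p).erase q) with h10 | h10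
    · exact ih (by lia) (by lia)
    · lia

lemma MarkData.steep (D : MarkData f A u) {m : ℤ} (hm : 4 ≤ m) {p v : V}
    (h : MarkReach A u p v) : f v = f p + m → 2 * m ≤ f p → False := by
  induction h with
  | base p h =>
    intro _ h2
    have := D.u_le
    lia
  | step p v q hp hq hpq h ih =>
    intro h1 h2
    have h3 := D.eq v (by lia)
    rw [MarkData.split2 f A v p q hpq] at h3
    have h4 := D.le_term hp
    have h5 := D.le_term hq
    have h6 := D.sum_nonneg v ((Finset.univ.erase p).erase q)
    have h7 := D.back h
    have h8 : A v p = 1 := MarkData.eq_one (x := f p) (r := m + 1) hp (by lia) (by lia) (by lia)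
    have h9 : A v q = 1 := MarkData.eq_one (x := f q) (r := m + 1) hq (by lia) (by lia) (by lia)
    rw [h8, h9] at h3
    rcases D.sum_zero_or v ((Finset.univ.erase p).erase q) with h10 | h10
    · exact ih (by lia) (by lia)
    · lia

/-- The second node. -/
lemma MarkData.second (D : MarkData f A u) {d e : V} (hm : 4 ≤ f d)
    (h : MarkReach A u d e) (hfe : f e = 2 * f d) : False := by
  cases h with
  | base _ h => have := D.u_le; lia
  | step _ _ q hp hq hpq h =>
    have h3 := D.eq e (by lia)
    rw [MarkData.split2 f A e d q hpq] at h3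
    have h4 := D.le_term hp
    have h5 := D.le_term hq
    have h6 := D.sum_nonneg e ((Finset.univ.erase d).erase q)
    have h7 := D.back h
    have h9 : A e q = 1 := MarkData.eq_one (x := f q) (r := f d + 1) hq (by lia) (by lia) (by lia)
    rw [h9] at h3
    -- the slope after `e`
    by_cases hz : f q = 2 * f d
    · exact D.flat h (by lia) (by lia)
    by_cases hs : f q = 3 * f d
    · exact D.steep hm h (by lia) (by lia)
    rcases D.sum_cases e ((Finset.univ.erase d).erase q) with h10 | ⟨x, hx, h10⟩
    · -- only the edge to `d` can be multiple
      rw [h10] at h3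
      have : A e d = 1 ∨ A e d = 2 ∨ 3 ≤ A e d := by lia
      rcases this with h | h | h
      · rw [h] at h3; lia
      · rw [h] at h3; lia
      · nlinarith
    · have h11 := D.half h10
      have h12 := D.le_term h10
      rw [← Finset.add_sum_erase _ _ hx] at h3 h6
      have h13 := D.sum_nonneg e (((Finset.univ.erase d).erase q).erase x)
      have h8 : A e d = 1 := MarkData.eq_one (x := f d) (r := 1) hp (by lia) (by lia) (by lia)
      have h14 : A e x = 1 := MarkData.eq_one (x := f x) (r := 1) h10 (by lia) (by lia) (by lia)
      rw [h8, h14] at h3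
      rcases D.sum_zero_or e (((Finset.univ.erase d).erase q).erase x) with h15 | h15
      · rw [h15] at h3
        have hfx : f x = f d + 1 := by lia
        have h16 := D.eq x (by lia)
        rw [MarkData.split1 f A x e] at h16
        have h17 := D.symm _ _ h10
        have h18 := D.le_term h17
        have h19 := D.sum_nonneg x (Finset.univ.erase e)
        have h20 : A x e = 1 :=
          MarkData.eq_one (x := f e) (r := 2) h17 (by lia) (by lia) (by lia)
        rw [h20] at h16
        rcases D.sum_zero_or x (Finset.univ.erase e) with h21 | h21 <;> lia
      · lia

/-- The graph of the data. -/
def MarkData.graph (D : MarkData f A u) : SimpleGraph V where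
  Adj i j := 1 ≤ A i j
  symm := ⟨fun i j h => D.symm i j h⟩
  loopless := ⟨fun i h => by rw [D.diag i] at h; lia⟩

lemma MarkData.reach_of_path (D : MarkData f A u) {v u' : V} (w : D.graph.Walk v u') (hu : u' = u) :
    w.IsPath → ∀ p, D.graph.Adj p v → p ∉ w.support → MarkReach A u p v := by
  induction w with
  | nil =>
    intro _ p hp _
    subst hu
    exact MarkReach.base p (D.symm _ _ hp)
  | cons h w ih =>
    intro hw p hp hps
    rw [SimpleGraph.Walk.cons_isPath_iff] at hw
    refine MarkReach.step p _ _ (D.symm _ _ hp) h ?_ (ih hu hw.1 _ h hw.2)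
    rintro rfl
    apply hps
    simp

/-- There is no set of nodes all of which have two neighbours inside the set. -/
lemma MarkData.no_core (D : MarkData f A u) (hconn : ∀ v, D.graph.Reachable v u) (S : Finset V)
    (v0 : V) (hv0 : v0 ∈ S)
    (hS : ∀ v ∈ S, ∃ a ∈ S, ∃ b ∈ S, a ≠ b ∧ 1 ≤ A v a ∧ 1 ≤ A v b) : False := by
  have h1 : ∑ j ∈ S, 2 * f j ≤ ∑ j ∈ S, ∑ v ∈ S, A v j * f j := by
    apply Finset.sum_le_sum
    intro j hj
    obtain ⟨a, ha, b, hb, hab, hja, hjb⟩ := hS j hj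
    have h2 : ∑ v ∈ ({a, b} : Finset V), A v j * f j ≤ ∑ v ∈ S, A v j * f j := by
      apply Finset.sum_le_sum_of_subset_of_nonneg
      · intro x hx
        simp only [Finset.mem_insert, Finset.mem_singleton] at hx
        rcases hx with rfl | rfl <;> assumption
      · intro i _ _
        exact D.term_nonneg i j
    rw [Finset.sum_pair hab] at h2
    have h3 := D.le_term (D.symm _ _ hja)
    have h4 := D.le_term (D.symm _ _ hjb)
    lia
  rw [Finset.sum_comm] at h1
  have h2 : ∀ v ∈ S, ∑ j ∈ S, A v j * f j ≤ ∑ j, A v j * f j := fun v _ =>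
    Finset.sum_le_sum_of_subset_of_nonneg (Finset.subset_univ S) fun j _ _ => D.term_nonneg v j
  have h3 : ∀ v ∈ S, ∑ j ∈ S, A v j * f j ≤ 2 * f v := fun v hv => (h2 v hv).trans (D.le v)
  have h4 := (Finset.sum_eq_sum_iff_of_le h3).1 (le_antisymm (Finset.sum_le_sum h3) h1)
  have hclosed : ∀ v ∈ S, ∀ x, 1 ≤ A v x → x ∈ S := by
    intro v hv x hx
    by_contra hxS
    have h5 : ∑ j ∈ insert x S, A v j * f j ≤ ∑ j, A v j * f j :=
      Finset.sum_le_sum_of_subset_of_nonneg (Finset.subset_univ _) fun j _ _ => D.term_nonneg v j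
    rw [Finset.sum_insert hxS, h4 v hv] at h5
    have h6 := D.le_term hx
    have h7 := D.le v
    have h8 := D.pos x
    lia
  have huS : u ∈ S := by
    obtain ⟨w⟩ := hconn v0
    clear hconn
    have : ∀ {a b : V} (w : D.graph.Walk a b), a ∈ S → b ∈ S := by
      intro a b w
      induction w with
      | nil => exact id
      | cons h w ih => exact fun ha => ih (hclosed _ ha _ h)
    exact this w hv0
  have h5 := h4 u huS
  have h6 := h2 u huS
  have h7 := D.u_lt
  lia

lemma MarkData.acyclic (D : MarkData f A u) (hconn : ∀ v, D.graph.Reachable v u) :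
    D.graph.IsAcyclic := by
  intro v c hc
  refine D.no_core hconn c.support.toFinset v (by simp) ?_
  intro x hx
  have hx' : x ∈ c.support := by simpa using hx
  have h2 := hc.ncard_neighborSet_toSubgraph_eq_two hx'
  obtain ⟨a, b, hab, hs⟩ := Set.ncard_eq_two.1 h2
  have ha : c.toSubgraph.Adj x a := by
    have : a ∈ c.toSubgraph.neighborSet x := by rw [hs]; simp
    exact this
  have hb : c.toSubgraph.Adj x b := by
    have : b ∈ c.toSubgraph.neighborSet x := by rw [hs]; simp
    exact this
  have ha' := c.toSubgraph.edge_vert ha.symm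
  have hb' := c.toSubgraph.edge_vert hb.symm
  rw [SimpleGraph.Walk.mem_verts_toSubgraph] at ha' hb'
  exact ⟨a, by simpa using ha', b, by simpa using hb', hab, ha.adj_sub, hb.adj_sub⟩

theorem MarkData.main (D : MarkData f A u) (d : V)
    (hconn : ∀ a b, a ≠ d → b ≠ d →
      Relation.ReflTransGen (fun i j => i ≠ d ∧ j ≠ d ∧ 1 ≤ A i j) a b) : f d ≤ 3 := by
  by_contra hcon
  have hm : 4 ≤ f d := by lia
  have hdu : d ≠ u := by
    rintro rfl
    have := D.u_le
    lia
  have hNd := D.eq d (by lia)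
  -- walks avoiding `d`
  have hwalk : ∀ a b, a ≠ d → b ≠ d → ∃ w : D.graph.Walk a b, d ∉ w.support := by
    intro a b ha hb
    have h := hconn a b ha hb
    clear hb
    induction h with
    | refl => exact ⟨SimpleGraph.Walk.nil, by simpa using ha.symm⟩
    | tail _ h ih =>
      obtain ⟨w, hw⟩ := ih
      have hadj : D.graph.Adj _ _ := h.2.2
      refine ⟨w.concat hadj, ?_⟩
      rw [SimpleGraph.Walk.support_concat]
      simp [hw, h.2.1.symm]
  obtain ⟨e, hde⟩ : ∃ e, 1 ≤ A d e := by
    rcases D.sum_cases d Finset.univ with h | ⟨x, _, h⟩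
    · lia
    · exact ⟨x, h⟩
  have hadj : D.graph.Adj d e := hde
  have hreach : ∀ v, D.graph.Reachable v u := by
    intro v
    by_cases hv : v = d
    · subst hv
      obtain ⟨w, _⟩ := hwalk e u hadj.ne.symm hdu.symm
      exact ⟨SimpleGraph.Walk.cons hadj w⟩
    · obtain ⟨w, _⟩ := hwalk v u hv hdu.symm
      exact ⟨w⟩
  have hac := D.acyclic hreach
  have huniq : ∀ x, 1 ≤ A d x → x = e := by
    intro x hx
    by_contra hne
    have hadjx : D.graph.Adj d x := hx
    obtain ⟨w, hw⟩ := hwalk x e hadjx.ne.symm hadj.ne.symm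
    have hw' : d ∉ w.bypass.support := fun h => hw (w.support_bypass_subset h)
    let P1 : D.graph.Path x e := ⟨w.bypass, w.bypass_isPath⟩
    let P2 : D.graph.Path x e := ⟨SimpleGraph.Walk.cons hadjx.symm
      (SimpleGraph.Walk.cons hadj SimpleGraph.Walk.nil), by
        simp [SimpleGraph.Walk.cons_isPath_iff, hadj.ne, hadjx.ne.symm, hne]⟩
    have h12 : P1 = P2 := hac.path_unique P1 P2
    apply hw'
    have : P1.1.support = P2.1.support := by rw [h12]
    change d ∈ P1.1.support
    rw [this]
    simp [P2]
  have hR : MarkReach A u d e := by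
    obtain ⟨w, hw⟩ := hwalk e u hadj.ne.symm hdu.symm
    exact D.reach_of_path w.bypass rfl w.bypass_isPath d hadj
      (fun h => hw (w.support_bypass_subset h))
  rw [MarkData.split1 f A d e] at hNd
  have h0 : ∑ j ∈ Finset.univ.erase e, A d j * f j = 0 := by
    rcases D.sum_cases d (Finset.univ.erase e) with h | ⟨x, hx, h⟩
    · exact h
    · exact absurd (huniq x h) (Finset.ne_of_mem_erase hx)
  rw [h0] at hNd
  have hb := D.back hR
  have : A d e = 1 ∨ A d e = 2 ∨ 3 ≤ A d e := by lia
  rcases this with h | h | h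
  · rw [h] at hNd
    exact D.second hm hR (by lia)
  · rw [h] at hNd
    exact D.flat hR (by lia) (by lia)
  · nlinarith
end Comb

section LiePart
open LieAlgebra LieModule LieAlgebra.IsKilling

variable {L : Type} [LieRing L] [LieAlgebra ℂ L] [FiniteDimensional ℂ L] [LieAlgebra.IsKilling ℂ L]
    {H : LieSubalgebra ℂ L} [H.IsCartanSubalgebra]

/-- The integer `⟨β, α^∨⟩`. -/
noncomputable def pairZ (β α : LieModule.Weight ℂ H L) : ℤ :=
  (chainBotCoeff α β : ℤ) - (chainTopCoeff α β : ℤ)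

lemma pairZ_cast (β α : LieModule.Weight ℂ H L) : (pairZ β α : ℂ) = β (coroot α) := by
  rw [apply_coroot_eq_cast, pairZ]

lemma pairZ_eq_pairingIn (β α : LieModule.Weight ℂ H L) (hα : α.IsNonZero) (hβ : β.IsNonZero) :
    pairZ β α = (rootSystem H).pairingIn ℤ ⟨β, by simpa using hβ⟩ ⟨α, by simpa using hα⟩ := by
  have h := (rootSystem H).algebraMap_pairingIn ℤ ⟨β, by simpa using hβ⟩ ⟨α, by simpa using hα⟩
  rw [rootSystem_pairing_apply] at h
  have h2 := pairZ_cast β α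
  have h3 : ((pairZ β α : ℤ) : ℂ) = algebraMap ℤ ℂ ((rootSystem H).pairingIn ℤ
      ⟨β, by simpa using hβ⟩ ⟨α, by simpa using hα⟩) := by
    rw [h, h2]
  simpa using h3

lemma pairZ_pos_symm (β α : LieModule.Weight ℂ H L) (hα : α.IsNonZero) (hβ : β.IsNonZero) :
    0 < pairZ β α ↔ 0 < pairZ α β := by
  rw [pairZ_eq_pairingIn β α hα hβ, pairZ_eq_pairingIn α β hβ hα]
  exact (rootSystem H).zero_lt_pairingIn_iff' ℤ

lemma pairZ_zero_symm (β α : LieModule.Weight ℂ H L) (hα : α.IsNonZero) (hβ : β.IsNonZero) :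
    pairZ β α = 0 ↔ pairZ α β = 0 := by
  rw [pairZ_eq_pairingIn β α hα hβ, pairZ_eq_pairingIn α β hβ hα]
  exact (rootSystem H).pairingIn_eq_zero_iff

lemma exists_weight_sub (β α : LieModule.Weight ℂ H L) (hα : α.IsNonZero)
    (h : 1 ≤ chainBotCoeff α β) :
    ∃ w : LieModule.Weight ℂ H L, (w : H → ℂ) = (β : H → ℂ) - (α : H → ℂ) := by
  have h1 := (rootSpace_zsmul_add_ne_bot_iff α β hα (-1)).2 ⟨by lia, by lia⟩
  refine ⟨⟨_, h1⟩, ?_⟩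
  change (-1 : ℤ) • (α : H → ℂ) + (β : H → ℂ) = _
  rw [neg_one_zsmul]
  abel

lemma exists_weight_add (β α : LieModule.Weight ℂ H L) (hα : α.IsNonZero)
    (h : 1 ≤ chainTopCoeff α β) :
    ∃ w : LieModule.Weight ℂ H L, (w : H → ℂ) = (β : H → ℂ) + (α : H → ℂ) := by
  have h1 := (rootSpace_zsmul_add_ne_bot_iff α β hα 1).2 ⟨by lia, by lia⟩
  refine ⟨⟨_, h1⟩, ?_⟩
  change (1 : ℤ) • (α : H → ℂ) + (β : H → ℂ) = _
  rw [one_zsmul]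
  abel

lemma top_of_weight_add (β α w : LieModule.Weight ℂ H L) (hα : α.IsNonZero)
    (h : (w : H → ℂ) = (β : H → ℂ) + (α : H → ℂ)) : 1 ≤ chainTopCoeff α β := by
  have h1 : rootSpace H ((1 : ℤ) • (α : H → ℂ) + (β : H → ℂ)) ≠ ⊥ := by
    rw [one_zsmul, add_comm, ← h]
    exact w.genWeightSpace_ne_bot
  have := ((rootSpace_zsmul_add_ne_bot_iff α β hα 1).1 h1).1
  lia

end LiePart

open LieAlgebra LieModule

/-- Let `L` be a finite-dimensional simple complex Lie algebra with highest root
`Λw = Σᵢ mᵢ αᵢ` (coefficients `m i = c Λw i` with respect to the base of simple roots).  Two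
nodes `a b` of the Dynkin diagram are adjacent iff `α a + α b` is a root.  If `d` is an index
such that deleting node `d` leaves a connected diagram (any two remaining nodes are joined by
a path avoiding `d`), i.e. the Levi subalgebra `g_d` is simple, then `m d ≤ 3`. -/
theorem stmt4
    (L : Type) [LieRing L] [LieAlgebra ℂ L] [FiniteDimensional ℂ L] [LieAlgebra.IsSimple ℂ L]
    (H : LieSubalgebra ℂ L) [H.IsCartanSubalgebra]
    (l : ℕ) (α : Fin l → LieModule.Weight ℂ H L)
    (hα : ∀ i, (α i).IsNonZero)
    (hind : LinearIndependent ℂ (fun i => ((α i : H → ℂ))))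
    (c : LieModule.Weight ℂ H L → Fin l → ℤ)
    (hc : ∀ w : LieModule.Weight ℂ H L, (w : H → ℂ) = ∑ i, (c w i : ℂ) • (α i : H → ℂ))
    (hbase : ∀ w : LieModule.Weight ℂ H L, w.IsNonZero →
      (∀ i, 0 ≤ c w i) ∨ (∀ i, c w i ≤ 0))
    (Λw : LieModule.Weight ℂ H L) (hΛne : Λw.IsNonZero)
    (hΛ : ∀ (w : LieModule.Weight ℂ H L) (i : Fin l), c w i ≤ c Λw i)
    (d : Fin l)
    (hconn : ∀ a b : Fin l, a ≠ d → b ≠ d →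
      Relation.ReflTransGen
        (fun i j : Fin l => i ≠ d ∧ j ≠ d ∧ i ≠ j ∧
          ∃ w : LieModule.Weight ℂ H L, (w : H → ℂ) = (α i : H → ℂ) + (α j : H → ℂ))
        a b) :
    c Λw d ≤ 3 := by
  -- uniqueness of coefficients
  have huniq : ∀ x y : Fin l → ℤ, ∑ i, (x i : ℂ) • (α i : H → ℂ) = ∑ i, (y i : ℂ) • (α i : H → ℂ) →
      x = y := by
    intro x y hxy
    have h0 : ∑ i, ((x i : ℂ) - (y i : ℂ)) • (α i : H → ℂ) = 0 := by
      simp only [sub_smul, Finset.sum_sub_distrib, hxy, sub_self]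
    have h1 := Fintype.linearIndependent_iff.1 hind _ h0
    funext i
    have h2 := sub_eq_zero.1 (h1 i)
    exact_mod_cast h2
  have hcα : ∀ i, c (α i) = Pi.single i 1 := by
    intro i
    apply huniq
    rw [← hc]
    rw [Finset.sum_eq_single i]
    · simp
    · intro b _ hb
      simp [Pi.single_eq_of_ne hb]
    · simp
  have hadd : ∀ w β γ : LieModule.Weight ℂ H L, (w : H → ℂ) = (β : H → ℂ) + (γ : H → ℂ) →
      c w = c β + c γ := by
    intro w β γ h
    apply huniq
    rw [← hc w, h, hc β, hc γ, ← Finset.sum_add_distrib]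
    exact Finset.sum_congr rfl fun i _ => by simp [add_smul]
  have hsub : ∀ w β γ : LieModule.Weight ℂ H L, (w : H → ℂ) = (β : H → ℂ) - (γ : H → ℂ) →
      c w = c β - c γ := by
    intro w β γ h
    have : c β = c w + c γ := hadd β w γ (by rw [h]; abel)
    rw [this]; abel
  -- differences of simple roots are not roots
  have hbot : ∀ i j, i ≠ j → chainBotCoeff (α i) (α j) = 0 := by
    intro i j hij
    by_contra hne
    obtain ⟨w, hw⟩ := exists_weight_sub (α j) (α i) (hα i) (by lia)
    have hcw := hsub w _ _ hw
    have hi : c w i = -1 := by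
      rw [hcw, hcα, hcα]; simp [hij]
    have hj : c w j = 1 := by
      rw [hcw, hcα, hcα]; simp [hij.symm]
    have hw0 : w.IsNonZero := by
      intro h0
      have : c w = 0 := by
        apply huniq
        rw [← hc w]
        have h0' : (w : H → ℂ) = 0 := h0
        rw [h0']; simp
      rw [this] at hj
      simp at hj
    rcases hbase w hw0 with h | h
    · have := h i; lia
    · have := h j; lia
  have hdom : ∀ i, 0 ≤ pairZ Λw (α i) := by
    intro i
    by_contra hne
    have h1 : 1 ≤ chainTopCoeff (α i) Λw := by
      unfold pairZ at hne
      lia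
    obtain ⟨w, hw⟩ := exists_weight_add Λw (α i) (hα i) h1
    have hcw := hadd w _ _ hw
    have h2 := hΛ w i
    rw [hcw, Pi.add_apply, hcα, Pi.single_eq_same] at h2
    lia
  have hpos : ∀ i, 1 ≤ c Λw i := by
    intro i
    have h2 := hΛ (α i) i
    rwa [hcα, Pi.single_eq_same] at h2
  -- `Λ` paired with a coroot
  have hpair : ∀ β : LieModule.Weight ℂ H L, pairZ Λw β = ∑ i, c Λw i * pairZ (α i) β := by
    intro β
    have h1 : (pairZ Λw β : ℂ) = ∑ i, (c Λw i : ℂ) * (pairZ (α i) β : ℂ) := by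
      rw [pairZ_cast]
      have h2 := congrFun (hc Λw) (IsKilling.coroot β)
      rw [h2, Finset.sum_apply]
      exact Finset.sum_congr rfl fun i _ => by rw [pairZ_cast]; rfl
    exact_mod_cast h1
  have hself : ∀ β : LieModule.Weight ℂ H L, β.IsNonZero → pairZ β β = 2 := by
    intro β hβ
    have h1 := pairZ_cast β β
    rw [IsKilling.root_apply_coroot hβ] at h1
    exact_mod_cast h1
  have hdual : ∀ i, 0 ≤ pairZ (α i) Λw := by
    intro i
    have h1 := pairZ_pos_symm Λw (α i) (hα i) hΛne
    have h2 := pairZ_zero_symm Λw (α i) (hα i) hΛne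
    have h3 := hdom i
    by_cases h : pairZ Λw (α i) = 0
    · rw [h2.1 h]
    · exact (h1.1 (by lia)).le
  have htwo : ∑ i, c Λw i * pairZ (α i) Λw = 2 := by rw [← hpair, hself _ hΛne]
  have hsmall : ∀ i, 0 < pairZ Λw (α i) → c Λw i ≤ 2 := by
    intro i hi
    have h1 := (pairZ_pos_symm Λw (α i) (hα i) hΛne).1 hi
    have h2 : c Λw i * pairZ (α i) Λw ≤ ∑ i, c Λw i * pairZ (α i) Λw :=
      Finset.single_le_sum (f := fun i => c Λw i * pairZ (α i) Λw)
        (fun j _ => mul_nonneg (by have := hpos j; lia) (hdual j)) (Finset.mem_univ i)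
    have h3 := hpos i
    nlinarith
  obtain ⟨u, hu⟩ : ∃ u, 0 < pairZ Λw (α u) := by
    by_contra hne
    have h1 : ∑ i, c Λw i * pairZ (α i) Λw = 0 := by
      apply Finset.sum_eq_zero
      intro i _
      have h2 : ¬ 0 < pairZ Λw (α i) := fun h => hne ⟨i, h⟩
      have h3 := hdom i
      have h4 := (pairZ_zero_symm Λw (α i) (hα i) hΛne).1 (by lia)
      rw [h4, mul_zero]
    lia
  -- the negated off-diagonal Cartan matrix
  let A : Fin l → Fin l → ℤ := fun i j => if i = j then 0 else - pairZ (α j) (α i)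
  have hA : ∀ i j, i ≠ j → A i j = (chainTopCoeff (α i) (α j) : ℤ) := by
    intro i j hij
    have h1 := hbot i j hij
    simp only [A, if_neg hij, pairZ]
    lia
  have hA' : ∀ i j, i ≠ j → A i j = - pairZ (α j) (α i) := fun i j hij => if_neg hij
  have hAd : ∀ i, A i i = 0 := fun i => if_pos rfl
  have hN : ∀ i, ∑ j, A i j * c Λw j = 2 * c Λw i - pairZ Λw (α i) := by
    intro i
    rw [hpair (α i), ← Finset.add_sum_erase _ _ (Finset.mem_univ i),
      ← Finset.add_sum_erase Finset.univ (fun j => c Λw j * pairZ (α j) (α i)) (Finset.mem_univ i),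
      hAd, hself _ (hα i)]
    have h1 : ∑ j ∈ Finset.univ.erase i, A i j * c Λw j =
        - ∑ j ∈ Finset.univ.erase i, c Λw j * pairZ (α j) (α i) := by
      rw [← Finset.sum_neg_distrib]
      apply Finset.sum_congr rfl
      intro j hj
      rw [hA' i j (Finset.ne_of_mem_erase hj).symm]
      ring
    rw [h1]
    ring
  have D : MarkData (c Λw) A u :=
    { pos := hpos
      nonneg := fun i j => by
        by_cases hij : i = j
        · rw [hij, hAd]
        · rw [hA i j hij]; lia
      diag := hAd
      symm := fun i j h => by
        by_cases hij : i = j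
        · rw [hij, hAd] at h; lia
        · have h1 := pairZ_zero_symm (α i) (α j) (hα j) (hα i)
          rw [hA' i j hij] at h
          have h2 := hA j i (Ne.symm hij)
          have h3 := hA' j i (Ne.symm hij)
          have h4 : pairZ (α i) (α j) ≠ 0 := fun h5 => by
            have := h1.1 h5
            lia
          lia
      le := fun i => by
        rw [hN]
        have := hdom i
        lia
      eq := fun i h => by
        rw [hN]
        have h1 := hdom i
        by_cases h2 : 0 < pairZ Λw (α i)
        · have := hsmall i h2
          lia
        · lia
      u_le := hsmall u hu
      u_lt := by
        rw [hN]
        lia }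
  apply D.main d
  intro a b ha hb
  refine Relation.ReflTransGen.mono ?_ a b (hconn a b ha hb)
  rintro i j ⟨hi, hj, hij, w, hw⟩
  refine ⟨hi, hj, ?_⟩
  rw [hA i j hij]
  have h1 := top_of_weight_add (α j) (α i) w (hα i) (by rw [hw, add_comm])
  exact_mod_cast h1
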